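/- Let the base set be ℕ. There is an order-preserving embedding of the power set of ℝ into the interval [⟨O^(1)⟩, ⟨T2⟩] of the clone lattice: an injective map ψ from subsets of ℝ to clones on ℕ such that ⟨O^(1)⟩ ⊆ ψ(A) ⊆ ⟨T2⟩ for all A ⊆ ℝ, and A ⊆ B if and only if ψ(A) ⊆ ψ(B). In particular, there are 2^{2^{ℵ0}} clones on ℕ containing all unary operations. -/

import Mathlib

universe u v

open Cardinal

/-- The set of all finitary operations on `X`: an `n`-th component element is an
operation of arity `n + 1` (so all arities are `≥ 1`). -/
abbrev Ops (X : Type u) : Type u := Σ n : ℕ, ((Fin (n + 1) → X) → X)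

/-- A clone: contains all projections and is closed under composition. -/
def IsClone {X : Type u} (C : Set (Ops X)) : Prop :=
  (∀ (n : ℕ) (k : Fin (n + 1)), (⟨n, fun x => x k⟩ : Ops X) ∈ C) ∧
  ∀ (n m : ℕ) (f : (Fin (n + 1) → X) → X), (⟨n, f⟩ : Ops X) ∈ C →
    ∀ g : Fin (n + 1) → ((Fin (m + 1) → X) → X), (∀ i, (⟨m, g i⟩ : Ops X) ∈ C) →
      (⟨m, fun x => f fun i => g i x⟩ : Ops X) ∈ C

/-- The clone generated by a set of operations. -/
def cloneGen {X : Type u} (F : Set (Ops X)) : Set (Ops X) :=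
  ⋂₀ {C : Set (Ops X) | IsClone C ∧ F ⊆ C}

/-- A precomplete (maximal) clone. -/
def IsPrecompleteClone {X : Type u} (C : Set (Ops X)) : Prop :=
  IsClone C ∧ C ≠ Set.univ ∧ ∀ f : Ops X, f ∉ C → cloneGen (insert f C) = Set.univ

/-- A unary function, viewed as a unary operation in `Ops X`. -/
def unaryOp {X : Type u} (F : X → X) : Ops X := ⟨0, fun x => F (x 0)⟩

/-- The polymorphism clone of a set of binary operations. -/
def Pol2 {X : Type u} (H : Set (X → X → X)) : Set (Ops X) :=
  {f : Ops X | ∀ g : Fin (f.1 + 1) → (X → X → X), (∀ i, g i ∈ H) →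
    (fun x y => f.2 fun i => g i x y) ∈ H}

/-- A binary operation on `ℕ` is essentially unary iff it depends on at most one
variable. -/
def EssUnary2 (u : ℕ → ℕ → ℕ) : Prop :=
  (∃ U : ℕ → ℕ, ∀ x y, u x y = U x) ∨ (∃ U : ℕ → ℕ, ∀ x y, u x y = U y)

/-- The set `∇` of points above the diagonal. -/
def Nabla : Set (ℕ × ℕ) := {p | p.1 < p.2}

/-- The set `T2` of binary never 1-1 operations on `ℕ`. -/
def T2bin : Set (ℕ → ℕ → ℕ) :=
  {f | ∀ u v : ℕ → ℕ → ℕ, EssUnary2 u → EssUnary2 v →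
    ¬ Set.InjOn (fun p : ℕ × ℕ => f (u p.1 p.2) (v p.1 p.2)) Nabla}

/-- `T2` inside `Ops ℕ`. -/
def T2ops : Set (Ops ℕ) :=
  (fun f : ℕ → ℕ → ℕ => (⟨1, fun x => f (x 0) (x 1)⟩ : Ops ℕ)) '' T2bin

/-- The set of all unary operations, inside `Ops ℕ`. -/
def unarySet : Set (Ops ℕ) := Set.range (unaryOp : (ℕ → ℕ) → Ops ℕ)

/-!
Clones containing all unary operations are told apart by how fast their operations blow up finite
sets. Fix finite digraphs on disjoint vertex sets `V 0, V 1, … ⊆ ℕ` such that the `n`-th has more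
than `n * |V n|` edges, but each of them is very sparse on sets of vertices that are small compared
to it. For a set `A` of indices let `f_A` be injective on the edges of the digraphs with index in
`A`, and zero elsewhere. For `n ∈ A`, the operation `f_A` takes more than `n * |V n|` values on
`V n`; for `n ∉ A`, it takes `O(|V n|)` values on any set of size `O(|V n|)`, since the earlier
digraphs have few edges and the later ones are sparse. If `A` is infinite, the operations mapping
sets of size `O(|V n|)` onto sets of size `O(|V n|)` as `n → ∞` in `A` form a clone which contains
all unary operations but not `f_A`, and which contains `f_B` for every `B` almost disjoint from `A`.
An almost disjoint family indexed by `ℝ` thus gives independent operations over the unary ones. The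
digraphs have finite degrees, so the operations are never 1-1.

The dense but locally sparse digraphs arise by iterating the mod 2 homology cover: a set of vertices
of the cover either projects injectively, and then the edges inside it form a forest, or its
projection is smaller, and sparsity of the base digraph can be lifted.
-/

open Filter
open scoped Function

section Sparse

variable {α β : Type*}

/-- A digraph, given by its set of edges, is `k`-locally sparse if at most `S.card` of its edges
run inside each set `S` of at most `k` vertices. The edges inside `S` are tested through finite
sets `F` of edges, so that no finiteness or decidability of `E` is needed. -/
def IsLocallySparse (k : ℕ) (E : Set (α × α)) : Prop :=
  ∀ (S : Finset α) (F : Finset (α × α)), S.card ≤ k → ↑F ⊆ E → F ⊆ S ×ˢ S → F.card ≤ S.card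

namespace IsLocallySparse

variable {k l : ℕ} {E : Set (α × α)}

lemma mono (hkl : k ≤ l) (h : IsLocallySparse l E) : IsLocallySparse k E :=
  fun S F hS => h S F (hS.trans hkl)

lemma lt_card {V : Finset α} {E : Finset (α × α)} (h : IsLocallySparse k (E : Set (α × α)))
    (hEV : E ⊆ V ×ˢ V) (hlt : V.card < E.card) : k < V.card := by
  by_contra! hVk
  exact hlt.not_ge (h V E hVk subset_rfl hEV)

lemma image (h : IsLocallySparse k E) (e : α ↪ β) :
    IsLocallySparse k (Prod.map e e '' E) := by
  classical
  intro S F hS hFE hFS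
  obtain ⟨F, hF, rfl⟩ := Finset.subset_set_image_iff.1 hFE
  let T : Finset α := S.preimage e e.injective.injOn
  have hTS : T.card ≤ S.card :=
    Finset.card_le_card_of_injOn e (fun a ha => Finset.mem_preimage.1 ha) e.injective.injOn
  have hFT : F ⊆ T ×ˢ T := fun p hp => by
    simpa [T] using Finset.mem_product.1 (hFS (Finset.mem_image_of_mem _ hp))
  exact Finset.card_image_le.trans ((h T F (hTS.trans hS) hF hFT).trans hTS)

lemma iUnion {ι : Type*} {V : ι → Set α} {E : ι → Set (α × α)} (hV : Pairwise (Disjoint on V))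
    (hEV : ∀ i, E i ⊆ V i ×ˢ V i) (h : ∀ i, IsLocallySparse k (E i)) :
    IsLocallySparse k (⋃ i, E i) := by
  classical
  intro S F hS hFE hFS
  rcases F.eq_empty_or_nonempty with rfl | ⟨p₀, hp₀⟩
  · simp
  have : Nonempty ι := (Set.mem_iUnion.1 (hFE hp₀)).nonempty
  choose! i hi using fun p (hp : p ∈ F) => Set.mem_iUnion.1 (hFE hp)
  have hfiber (j : ι) : (F.filter (i · = j)).card ≤ (S.filter (· ∈ V j)).card := by
    have hFj {p} (hp : p ∈ F.filter (i · = j)) : p ∈ F ∧ p ∈ E j := by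
      obtain ⟨hpF, rfl⟩ := Finset.mem_filter.1 hp
      exact ⟨hpF, hi p hpF⟩
    refine h j _ _ ((Finset.card_filter_le _ _).trans hS) (fun p hp => (hFj hp).2) fun p hp => ?_
    have hpS := Finset.mem_product.1 (hFS (hFj hp).1)
    have hpV := hEV j (hFj hp).2
    exact Finset.mem_product.2
      ⟨Finset.mem_filter.2 ⟨hpS.1, hpV.1⟩, Finset.mem_filter.2 ⟨hpS.2, hpV.2⟩⟩
  have hdisj : (F.image i : Set ι).PairwiseDisjoint fun j => S.filter (· ∈ V j) :=
    fun j _ j' _ hjj' => Finset.disjoint_filter.2 fun x _ hx hx' =>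
      Set.disjoint_left.1 (hV hjj') hx hx'
  calc F.card = ∑ j ∈ F.image i, (F.filter (i · = j)).card :=
        Finset.card_eq_sum_card_fiberwise fun p hp => Finset.mem_image_of_mem i hp
    _ ≤ ∑ j ∈ F.image i, (S.filter (· ∈ V j)).card := Finset.sum_le_sum fun j _ => hfiber j
    _ = ((F.image i).biUnion fun j => S.filter (· ∈ V j)).card := (Finset.card_biUnion hdisj).symm
    _ ≤ S.card := Finset.card_le_card <| Finset.biUnion_subset.2 fun j _ => Finset.filter_subset _ _

/-- Local sparsity is Hall's condition for matching edges with endpoints. -/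
lemma exists_injOn_endpoint (h : IsLocallySparse k E) {S : Finset α} (hS : S.card ≤ k)
    {F : Finset (α × α)} (hFE : ↑F ⊆ E) (hFS : F ⊆ S ×ˢ S) :
    ∃ φ : α × α → α, Set.InjOn φ F ∧ ∀ p, φ p = p.1 ∨ φ p = p.2 := by
  classical
  have hall (F' : Finset F) : F'.card ≤ (F'.biUnion fun p => {p.1.1, p.1.2}).card := by
    have hends : F'.biUnion (fun p => {p.1.1, p.1.2}) ⊆ S := by
      refine Finset.biUnion_subset.2 fun p _ => ?_
      simp [Finset.insert_subset_iff, Finset.mem_product.1 (hFS p.2)]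
    rw [← Finset.card_map (.subtype (· ∈ F))]
    refine h _ _ ((Finset.card_le_card hends).trans hS) (fun p hp => ?_) fun p hp => ?_
    · obtain ⟨q, -, rfl⟩ := Finset.mem_map.1 hp
      exact hFE q.2
    · obtain ⟨q, hq, rfl⟩ := Finset.mem_map.1 hp
      simp only [Finset.mem_product, Finset.mem_biUnion]
      exact ⟨⟨q, hq, by simp⟩, ⟨q, hq, by simp⟩⟩
  obtain ⟨φ, hφ, hmem⟩ := (Finset.all_card_le_biUnion_card_iff_exists_injective _).1 hall
  refine ⟨fun p => if hp : p ∈ F then φ ⟨p, hp⟩ else p.1, fun p hp q hq hpq => ?_, fun p => ?_⟩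
  · simp only [Finset.mem_coe.1 hp, Finset.mem_coe.1 hq, dite_true] at hpq
    exact congrArg Subtype.val (hφ hpq)
  · by_cases hp : p ∈ F
    · simpa [hp] using hmem ⟨p, hp⟩
    · simp [hp]

end IsLocallySparse

section HomologyCover

/-- The vertices of the mod 2 homology cover of a digraph on `α`: a vertex of the digraph together
with a 1-chain mod 2. -/
abbrev CoverVertex (α : Type*) : Type _ := α × (α × α → ZMod 2)

variable [DecidableEq α]

/-- The edges of the mod 2 homology cover of the digraph `E`: every edge `(u, v)` of `E` lifts to
the edges from `(u, x)` to `(v, x + δ)`, where `δ` is the unit vector at `(u, v)`. -/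
def homologyCover (E : Set (α × α)) : Set (CoverVertex α × CoverVertex α) :=
  {p | (p.1.1, p.2.1) ∈ E ∧ p.2.2 = p.1.2 + Pi.single (p.1.1, p.2.1) 1}

variable {E : Set (α × α)}

lemma ncard_homologyCover :
    (homologyCover E).ncard = E.ncard * Nat.card (α × α → ZMod 2) := by
  let lift (q : (α × α) × (α × α → ZMod 2)) : CoverVertex α × CoverVertex α :=
    ((q.1.1, q.2), (q.1.2, q.2 + Pi.single q.1 1))
  have hlift : lift.Injective := by
    rintro ⟨⟨u, v⟩, x⟩ ⟨⟨u', v'⟩, x'⟩ h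
    simp only [lift, Prod.mk.injEq] at h ⊢
    exact ⟨⟨h.1.1, h.2.1⟩, h.1.2⟩
  have himage : homologyCover E = lift '' (E ×ˢ Set.univ) := by
    ext ⟨⟨u, x⟩, ⟨v, y⟩⟩
    constructor
    · rintro ⟨huv, hy⟩
      exact ⟨((u, v), x), ⟨huv, trivial⟩, Prod.ext rfl (Prod.ext rfl hy.symm)⟩
    · rintro ⟨⟨⟨u, v⟩, x⟩, ⟨huv, -⟩, h⟩
      cases h
      exact ⟨huv, rfl⟩
  rw [himage, Set.ncard_image_of_injective _ hlift, Set.ncard_prod, Set.ncard_univ]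

/-- The edges of `E` below `F` are distinct, and their unit vectors are linearly independent
vectors in the span of the second coordinates of `S`. -/
lemma card_le_of_subset_homologyCover_of_injOn_fst [Finite α] {S : Finset (CoverVertex α)}
    (hS : Set.InjOn Prod.fst (S : Set (CoverVertex α)))
    {F : Finset (CoverVertex α × CoverVertex α)}
    (hFE : ↑F ⊆ homologyCover E) (hFS : F ⊆ S ×ˢ S) : F.card ≤ S.card := by
  classical
  have hends (p : F) := Finset.mem_product.1 (hFS p.2)
  let edge (p : F) : α × α := (p.1.1.1, p.1.2.1)
  have hedge : edge.Injective := fun p q h => Subtype.ext <| Prod.ext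
    (hS (hends p).1 (hends q).1 (Prod.mk.inj h).1) (hS (hends p).2 (hends q).2 (Prod.mk.inj h).2)
  have hspan : Set.range (Pi.basisFun (ZMod 2) (α × α) ∘ edge) ≤
      Submodule.span (ZMod 2) ((S.image Prod.snd : Finset _) : Set (α × α → ZMod 2)) := by
    rintro _ ⟨p, rfl⟩
    have hdiff : p.1.2.2 - p.1.1.2 = (Pi.basisFun (ZMod 2) (α × α) ∘ edge) p := by
      simp [(hFE p.2).2, edge]
    rw [← hdiff]
    exact sub_mem (Submodule.subset_span (Finset.mem_image_of_mem _ (hends p).2))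
      (Submodule.subset_span (Finset.mem_image_of_mem _ (hends p).1))
  have hcard := linearIndependent_le_span' _
    ((Pi.basisFun (ZMod 2) (α × α)).linearIndependent.comp edge hedge) _ hspan
  have hFimage : F.card ≤ (S.image Prod.snd).card := by simpa using hcard
  exact hFimage.trans Finset.card_image_le

lemma injOn_lift_endpoint_of_subset_homologyCover {F : Set (CoverVertex α × CoverVertex α)}
    (hFE : F ⊆ homologyCover E) {φ : α × α → α}
    (hφ : Set.InjOn φ (Prod.map Prod.fst Prod.fst '' F)) (hend : ∀ e, φ e = e.1 ∨ φ e = e.2) :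
    Set.InjOn (fun p => if φ (p.1.1, p.2.1) = p.1.1 then p.1 else p.2) F := by
  have hfst (p : CoverVertex α × CoverVertex α) :
      (if φ (p.1.1, p.2.1) = p.1.1 then p.1 else p.2).1 = φ (p.1.1, p.2.1) := by
    split_ifs with hp
    · exact hp.symm
    · exact ((hend (p.1.1, p.2.1)).resolve_left hp).symm
  intro p hp q hq hpq
  have hedge : (p.1.1, p.2.1) = (q.1.1, q.2.1) :=
    hφ ⟨p, hp, rfl⟩ ⟨q, hq, rfl⟩ ((hfst p).symm.trans ((congrArg Prod.fst hpq).trans (hfst q)))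
  obtain ⟨hsource, htarget⟩ := Prod.mk.inj hedge
  have hshift := (hFE hp).2
  rw [hedge] at hshift
  have hlevel : p.1.2 = q.1.2 ∧ p.2.2 = q.2.2 := by
    simp only [hsource, htarget] at hpq
    split_ifs at hpq
    · have hx := congrArg Prod.snd hpq
      exact ⟨hx, by rw [hshift, (hFE hq).2, hx]⟩
    · have hy := congrArg Prod.snd hpq
      exact ⟨add_right_cancel (hshift.symm.trans (hy.trans (hFE hq).2)), hy⟩
  exact Prod.ext (Prod.ext hsource hlevel.1) (Prod.ext htarget hlevel.2)

/-- If two vertices of `S` share a first coordinate, then `S` projects to at most `k` vertices, and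
a charging of the edges below to their endpoints lifts to the cover. -/
lemma IsLocallySparse.homologyCover [Finite α] {k : ℕ} (h : IsLocallySparse k E) :
    IsLocallySparse (k + 1) (homologyCover E) := by
  intro S F hS hFE hFS
  by_cases hinj : Set.InjOn Prod.fst (S : Set (CoverVertex α))
  · exact card_le_of_subset_homologyCover_of_injOn_fst hinj hFE hFS
  have hproj : (S.image Prod.fst).card ≤ k := by
    have := Finset.card_image_le (s := S) (f := Prod.fst)
    have := mt Finset.card_image_iff.1 hinj
    omega
  have hends {p} (hp : p ∈ F) := Finset.mem_product.1 (hFS hp)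
  obtain ⟨φ, hφ, hend⟩ := h.exists_injOn_endpoint
    (F := F.image (Prod.map Prod.fst Prod.fst)) hproj
    (by
      rw [Finset.coe_image]
      rintro _ ⟨p, hp, rfl⟩
      exact (hFE hp).1)
    (Finset.image_subset_iff.2 fun p hp => Finset.mem_product.2
      ⟨Finset.mem_image_of_mem _ (hends hp).1, Finset.mem_image_of_mem _ (hends hp).2⟩)
  rw [Finset.coe_image] at hφ
  refine Finset.card_le_card_of_injOn _ (fun p hp => ?_)
    (injOn_lift_endpoint_of_subset_homologyCover hFE hφ hend)
  have := hends hp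
  split_ifs
  exacts [this.1, this.2]

end HomologyCover

lemma exists_isLocallySparse_ncard_eq {d : ℕ} (hd : d ≠ 0) (k : ℕ) :
    ∃ (V : Type) (_ : Finite V) (_ : Nonempty V) (E : Set (V × V)),
      E.ncard = d * Nat.card V ∧ IsLocallySparse k E := by
  classical
  induction k with
  | zero =>
    have : NeZero d := ⟨hd⟩
    refine ⟨Fin d, inferInstance, inferInstance, Set.univ, by simp [Set.ncard_univ], ?_⟩
    intro S F hS _ hFS
    rw [Finset.card_eq_zero.1 (Nat.le_zero.1 hS), Finset.empty_product,
      Finset.subset_empty] at hFS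
    simp [hFS]
  | succ k ih =>
    obtain ⟨V, _, _, E, hcard, hsparse⟩ := ih
    refine ⟨CoverVertex V, inferInstance, inferInstance, homologyCover E, ?_,
      hsparse.homologyCover⟩
    rw [ncard_homologyCover, hcard, Nat.card_prod, mul_assoc]

lemma exists_finset_isLocallySparse {X : Set α} (hX : X.Infinite) {d : ℕ} (hd : d ≠ 0) (k : ℕ) :
    ∃ (V : Finset α) (E : Finset (α × α)), ↑V ⊆ X ∧ V.Nonempty ∧ E ⊆ V ×ˢ V ∧
      E.card = d * V.card ∧ IsLocallySparse k (E : Set (α × α)) := by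
  classical
  obtain ⟨V, _, _, E, hcard, hsparse⟩ := exists_isLocallySparse_ncard_eq hd k
  have := Fintype.ofFinite V
  let ι : V ↪ X :=
    ((Finite.equivFin V).toEmbedding.trans Fin.valEmbedding).trans (hX.natEmbedding X)
  let e : V ↪ α := ι.trans (.subtype _)
  have he : Set.range e ⊆ X := by
    rintro _ ⟨v, rfl⟩
    exact (ι v).2
  refine ⟨Finset.univ.map e, (E.toFinite.toFinset).map (e.prodMap e), by simpa using he,
    by simp, fun p hp => ?_, ?_, by simpa using hsparse.image e⟩
  · obtain ⟨q, -, rfl⟩ := Finset.mem_map.1 hp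
    simp
  · rw [Finset.card_map, Finset.card_map, Finset.card_univ, ← Nat.card_eq_fintype_card, ← hcard,
      Set.ncard_eq_toFinset_card E]

end Sparse

/-- A sequence of finite digraphs on disjoint sets of natural numbers. The `n`-th one has more than
`n` edges per vertex, but is sparse on sets of at most as many vertices as its predecessors have
edges in total, a number which does not exceed that of its own vertices. -/
structure SparseTower where
  /-- The vertices of the `n`-th digraph. -/
  V : ℕ → Finset ℕ
  /-- The edges of the `n`-th digraph. -/
  E : ℕ → Finset (ℕ × ℕ)
  disjoint : Pairwise (Disjoint on V)
  subset (n : ℕ) : E n ⊆ V n ×ˢ V n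
  mul_card_lt (n : ℕ) : n * (V n).card < (E n).card
  sum_card_le (n : ℕ) : ∑ i ∈ Finset.range n, (E i).card ≤ (V n).card
  sparse (n : ℕ) :
    IsLocallySparse (∑ i ∈ Finset.range n, (E i).card) (E n : Set (ℕ × ℕ))

namespace SparseTower

instance : Nonempty SparseTower := by
  let X (n : ℕ) : Set ℕ := {x | x.unpair.1 = n}
  have hX (n : ℕ) : (X n).Infinite :=
    Set.infinite_of_injective_forall_mem (f := Nat.pair n)
      (fun a b h => (Nat.pair_eq_pair.1 h).2) fun a => by simp [X]
  choose V E hVX hV hEV hcard hsparse using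
    fun n k => exists_finset_isLocallySparse (hX n) (d := n + 2) (by simp) k
  let T : ℕ → ℕ := Nat.rec 0 fun n t => t + (E n t).card
  have hT (n : ℕ) : T n = ∑ i ∈ Finset.range n, (E i (T i)).card := by
    induction n with
    | zero => rfl
    | succ n ih => rw [Finset.sum_range_succ, ← ih]
  have hlt (n : ℕ) : (n + 1) * (V n (T n)).card < (E n (T n)).card := by
    rw [hcard]
    exact Nat.mul_lt_mul_of_pos_right (by simp) (hV n (T n)).card_pos
  refine ⟨⟨fun n => V n (T n), fun n => E n (T n), fun m n hmn => ?_, fun n => hEV _ _,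
    fun n => (Nat.mul_le_mul_right _ n.le_succ).trans_lt (hlt n), fun n => ?_, fun n => ?_⟩⟩
  · exact Finset.disjoint_left.2 fun x hxm hxn => hmn ((hVX _ _ hxm).symm.trans (hVX _ _ hxn))
  · rw [← hT]
    exact ((hsparse n (T n)).lt_card (hEV _ _)
      ((Nat.le_mul_of_pos_left _ n.succ_pos).trans_lt (hlt n))).le
  · rw [← hT]
    exact hsparse _ _

variable (G : SparseTower)

/-- The union of the digraphs with index in `A`. -/
def edges (A : Set ℕ) : Set (ℕ × ℕ) := ⋃ n ∈ A, G.E n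

variable {A : Set ℕ}

lemma card_pos (n : ℕ) : 0 < (G.V n).card := by
  obtain ⟨p, hp⟩ := Finset.card_pos.1 ((Nat.zero_le _).trans_lt (G.mul_card_lt n))
  exact Finset.card_pos.2 ⟨p.1, (Finset.mem_product.1 (G.subset n hp)).1⟩

lemma isLocallySparse_edges_Ioi (n : ℕ) :
    IsLocallySparse (n * (G.V n).card) (G.edges (Set.Ioi n)) := by
  rw [edges, Set.biUnion_eq_iUnion]
  refine .iUnion (V := fun m : Set.Ioi n => (G.V m : Set ℕ))
    (fun i j hij => Finset.disjoint_coe.2 (G.disjoint (Subtype.coe_ne_coe.2 hij)))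
    (fun i => by exact_mod_cast G.subset i)
    fun m => (G.sparse m).mono ((G.mul_card_lt n).le.trans ?_)
  exact Finset.single_le_sum_of_canonicallyOrdered (f := fun i => (G.E i).card)
    (Finset.mem_range.2 m.2)

lemma finite_setOf_mem_edges (a : ℕ) : {p ∈ G.edges A | p.1 = a ∨ p.2 = a}.Finite := by
  have hsub : {n | a ∈ G.V n}.Subsingleton := fun m hm n hn =>
    G.disjoint.eq (Finset.not_disjoint_iff.2 ⟨a, hm, hn⟩)
  refine (hsub.finite.biUnion fun n _ => (G.E n).finite_toSet).subset ?_
  rintro p ⟨hp, hpa⟩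
  obtain ⟨n, -, hpn⟩ := Set.mem_iUnion₂.1 hp
  have hpV := Finset.mem_product.1 (G.subset n hpn)
  refine Set.mem_biUnion (x := n) ?_ hpn
  rcases hpa with rfl | rfl
  exacts [hpV.1, hpV.2]

variable {G}

lemma subset_edges {n : ℕ} (hn : n ∈ A) : ↑(G.E n) ⊆ G.edges A :=
  Set.subset_biUnion_of_mem (u := fun n => (G.E n : Set (ℕ × ℕ))) hn

/-- The digraphs below `n` have few edges altogether, and those above `n` are sparse inside `B`. -/
lemma card_le_of_subset_edges {n : ℕ} (hn : n ∉ A) {B : Finset ℕ}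
    (hB : B.card ≤ n * (G.V n).card) {F : Finset (ℕ × ℕ)} (hFA : ↑F ⊆ G.edges A)
    (hFB : F ⊆ B ×ˢ B) : F.card ≤ (G.V n).card + B.card := by
  classical
  let below : Finset (ℕ × ℕ) := (Finset.range n).biUnion G.E
  have hbelow : (F ∩ below).card ≤ (G.V n).card :=
    (Finset.card_le_card Finset.inter_subset_right).trans
      (Finset.card_biUnion_le.trans (G.sum_card_le n))
  have habove : (F \ below).card ≤ B.card := by
    refine G.isLocallySparse_edges_Ioi n B _ hB (fun p hp => ?_) (Finset.sdiff_subset.trans hFB)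
    obtain ⟨hpF, hp⟩ := Finset.mem_sdiff.1 hp
    obtain ⟨m, hm, hpm⟩ := Set.mem_iUnion₂.1 (hFA hpF)
    have hmn : ¬ m < n := fun hlt => hp (Finset.mem_biUnion.2 ⟨m, Finset.mem_range.2 hlt, hpm⟩)
    exact subset_edges (lt_of_le_of_ne (not_lt.1 hmn) fun h => hn (h ▸ hm)) hpm
  rw [← Finset.card_inter_add_card_sdiff F below]
  exact add_le_add hbelow habove

end SparseTower

section Clone

variable {X : Type*} {U C : Set (Ops X)}

lemma isClone_cloneGen (U : Set (Ops X)) : IsClone (cloneGen U) :=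
  ⟨fun n k _ hC => hC.1.1 n k,
    fun n m f hf g hg C hC => hC.1.2 n m f (hf C hC) g fun i => hg i C hC⟩

lemma subset_cloneGen (U : Set (Ops X)) : U ⊆ cloneGen U :=
  Set.subset_sInter fun _ hC => hC.2

lemma cloneGen_subset (hC : IsClone C) (hUC : U ⊆ C) : cloneGen U ⊆ C :=
  Set.sInter_subset_of_mem ⟨hC, hUC⟩

lemma cloneGen_mono {U' : Set (Ops X)} (h : U ⊆ U') : cloneGen U ⊆ cloneGen U' :=
  cloneGen_subset (isClone_cloneGen U') (h.trans (subset_cloneGen U'))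

lemma cloneGen_union_image_subset_iff {ι : Type*} {f : ι → Ops X}
    (h : ∀ i, ∃ C, IsClone C ∧ U ⊆ C ∧ f i ∉ C ∧ ∀ j ≠ i, f j ∈ C) {A B : Set ι} :
    cloneGen (U ∪ f '' A) ⊆ cloneGen (U ∪ f '' B) ↔ A ⊆ B := by
  refine ⟨fun hAB i hiA => ?_, fun hAB => cloneGen_mono (by gcongr)⟩
  by_contra hiB
  obtain ⟨C, hC, hUC, hiC, hC_of_ne⟩ := h i
  have hBC : U ∪ f '' B ⊆ C := by
    refine Set.union_subset hUC ?_
    rintro _ ⟨j, hj, rfl⟩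
    exact hC_of_ne j fun hji => hiB (hji ▸ hj)
  exact hiC (cloneGen_subset hC hBC (hAB (subset_cloneGen _ (.inr ⟨i, hiA, rfl⟩))))

/-- A binary function, viewed as a binary operation in `Ops X`. -/
def binaryOp (f : X → X → X) : Ops X := ⟨1, fun x => f (x 0) (x 1)⟩

section Image

variable [DecidableEq X]

/-- The set of values of the operation `f` on arguments in the finite set `B`. -/
def Ops.image (f : Ops X) (B : Finset X) : Finset X :=
  (Fintype.piFinset fun _ => B).image f.2

lemma Ops.mem_image {f : Ops X} {B : Finset X} {y : X} :
    y ∈ f.image B ↔ ∃ x, (∀ i, x i ∈ B) ∧ f.2 x = y := by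
  simp [Ops.image, Fintype.mem_piFinset]

lemma image_unaryOp (F : X → X) (B : Finset X) : (unaryOp F).image B = B.image F := by
  ext y
  rw [Ops.mem_image, Finset.mem_image]
  exact ⟨fun ⟨x, hx, hy⟩ => ⟨x 0, hx 0, hy⟩, fun ⟨x, hx, hy⟩ => ⟨fun _ => x, fun _ => hx, hy⟩⟩

lemma image_binaryOp (f : X → X → X) (B : Finset X) :
    (binaryOp f).image B = (B ×ˢ B).image (Function.uncurry f) := by
  ext y
  rw [Ops.mem_image, Finset.mem_image]
  refine ⟨fun ⟨x, hx, hy⟩ => ⟨(x 0, x 1), Finset.mem_product.2 ⟨hx 0, hx 1⟩, hy⟩,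
    fun ⟨p, hp, hy⟩ => ⟨![p.1, p.2], ?_, hy⟩⟩
  exact Fin.forall_fin_two.2 (Finset.mem_product.1 hp)

variable {ι : Type*} {l : Filter ι} {q : ι → ℕ}

variable (l q) in
/-- The operations that, along the filter `l`, map sets of size `O(q)` onto sets of size `O(q)`. -/
def linearGrowthClone : Set (Ops X) :=
  {f | ∀ C : ℕ, ∃ C' : ℕ, ∀ᶠ n in l, ∀ B : Finset X,
    B.card ≤ C * q n → (f.image B).card ≤ C' * q n}

lemma isClone_linearGrowthClone : IsClone (linearGrowthClone l q : Set (Ops X)) := by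
  refine ⟨fun m k C => ⟨C, .of_forall fun n B hB => ?_⟩, fun m r f hf g hg C => ?_⟩
  · refine (Finset.card_le_card fun y hy => ?_).trans hB
    obtain ⟨x, hx, rfl⟩ := Ops.mem_image.1 hy
    exact hx k
  · choose D hD using fun i => hg i C
    obtain ⟨C', hC'⟩ := hf (∑ i, D i)
    refine ⟨C', ?_⟩
    filter_upwards [eventually_all.2 hD, hC'] with n hgn hfn B hB
    let B' : Finset X := Finset.univ.biUnion fun i => Ops.image ⟨r, g i⟩ B
    have hB' : B'.card ≤ (∑ i, D i) * q n := by
      rw [Finset.sum_mul]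
      exact Finset.card_biUnion_le.trans (Finset.sum_le_sum fun i _ => hgn i B hB)
    refine (Finset.card_le_card fun y hy => ?_).trans (hfn B' hB')
    obtain ⟨x, hx, rfl⟩ := Ops.mem_image.1 hy
    exact Ops.mem_image.2 ⟨_, fun i => Finset.mem_biUnion.2
      ⟨i, Finset.mem_univ i, Ops.mem_image.2 ⟨x, hx, rfl⟩⟩, rfl⟩

lemma unaryOp_mem_linearGrowthClone (F : X → X) : unaryOp F ∈ linearGrowthClone l q :=
  fun C => ⟨C, .of_forall fun n B hB => by
    rw [image_unaryOp]
    exact Finset.card_image_le.trans hB⟩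

end Image

end Clone

section EdgeOp

open Classical in
/-- The binary operation that is injective on the edges of the digraph `E` and vanishes
elsewhere. -/
noncomputable def edgeOp (E : Set (ℕ × ℕ)) (x y : ℕ) : ℕ :=
  if (x, y) ∈ E then Nat.pair x y + 1 else 0

variable {E : Set (ℕ × ℕ)}

lemma injOn_edgeOp : Set.InjOn (Function.uncurry (edgeOp E)) E := by
  rintro ⟨x, y⟩ hxy ⟨x', y'⟩ hxy' h
  simpa [edgeOp, hxy, hxy'] using h

lemma card_le_card_image_edgeOp {B : Finset ℕ} {F : Finset (ℕ × ℕ)} (hFE : ↑F ⊆ E)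
    (hFB : F ⊆ B ×ˢ B) : F.card ≤ ((binaryOp (edgeOp E)).image B).card := by
  rw [image_binaryOp, ← Finset.card_image_of_injOn (injOn_edgeOp.mono hFE)]
  gcongr

open Classical in
lemma card_image_edgeOp_le (B : Finset ℕ) :
    ((binaryOp (edgeOp E)).image B).card ≤ ((B ×ˢ B).filter (· ∈ E)).card + 1 := by
  rw [image_binaryOp]
  refine (Finset.card_le_card (t := insert 0 (((B ×ˢ B).filter (· ∈ E)).image
    (Function.uncurry (edgeOp E)))) fun y hy => ?_).trans
      ((Finset.card_insert_le _ _).trans (by gcongr; exact Finset.card_image_le))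
  obtain ⟨p, hp, rfl⟩ := Finset.mem_image.1 hy
  by_cases hpE : p ∈ E
  · exact Finset.mem_insert_of_mem (Finset.mem_image_of_mem _ (Finset.mem_filter.2 ⟨hp, hpE⟩))
  · exact Finset.mem_insert.2 (.inl (if_neg hpE))

namespace SparseTower

variable {G : SparseTower} {A A' : Set ℕ}

lemma edgeOp_mem_linearGrowthClone (h : (A' ∩ A).Finite) :
    binaryOp (edgeOp (G.edges A')) ∈
      linearGrowthClone (atTop ⊓ 𝓟 A) fun n => (G.V n).card := by
  classical
  refine fun C => ⟨C + 2, ?_⟩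
  rw [eventually_inf_principal]
  have hmem : ∀ᶠ n in atTop, n ∉ A' ∩ A :=
    Nat.cofinite_eq_atTop ▸ h.eventually_cofinite_notMem
  filter_upwards [hmem, eventually_ge_atTop C] with n hn hCn hnA B hB
  have hedges := card_le_of_subset_edges (G := G) (fun hnA' => hn ⟨hnA', hnA⟩)
    (hB.trans (Nat.mul_le_mul_right _ hCn))
    (F := (B ×ˢ B).filter (· ∈ G.edges A')) (fun p hp => (Finset.mem_filter.1 hp).2)
    (Finset.filter_subset _ _)
  have hpos := G.card_pos n
  linarith [card_image_edgeOp_le (E := G.edges A') B]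

lemma edgeOp_notMem_linearGrowthClone (hA : A.Infinite) :
    binaryOp (edgeOp (G.edges A)) ∉
      linearGrowthClone (atTop ⊓ 𝓟 A) fun n => (G.V n).card := by
  intro h
  obtain ⟨C, hC⟩ := h 1
  rw [eventually_inf_principal] at hC
  obtain ⟨n, hnA, hn, hCn⟩ := ((Nat.frequently_atTop_iff_infinite.2 hA).and_eventually
    (hC.and (eventually_ge_atTop C))).exists
  have hdense := card_le_card_image_edgeOp (subset_edges hnA) (G.subset n)
  exact (G.mul_card_lt n).not_ge <| hdense.trans <|
    (hn hnA (G.V n) (one_mul _).ge).trans (Nat.mul_le_mul_right _ hCn)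

end SparseTower
end EdgeOp

section NeverInjective

lemma not_injOn_nabla_of_finite_range {g : ℕ → ℕ → ℕ} (hg : (Set.range (g 0)).Finite) :
    ¬ Set.InjOn (fun p : ℕ × ℕ => g p.1 p.2) Nabla := by
  intro hinj
  refine Set.infinite_range_of_injective (f := fun y => g 0 (y + 1)) (fun y y' hy => ?_)
    (hg.subset (Set.range_comp_subset_range _ _))
  have hpair : (0, y + 1) = (0, y' + 1) := hinj (by simp [Nabla]) (by simp [Nabla]) hy
  simpa using hpair

lemma EssUnary2.not_injOn_nabla {g : ℕ → ℕ → ℕ} (hg : EssUnary2 g) :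
    ¬ Set.InjOn (fun p : ℕ × ℕ => g p.1 p.2) Nabla := by
  rcases hg with ⟨U, hU⟩ | ⟨U, hU⟩
  · refine not_injOn_nabla_of_finite_range ((Set.finite_singleton (U 0)).subset ?_)
    rintro _ ⟨y, rfl⟩
    exact hU 0 y
  · intro hinj
    have hpair : (0, 2) = (1, 2) := hinj (by simp [Nabla]) (by simp [Nabla]) (by simp [hU])
    simp at hpair

lemma mem_T2bin_of_finite_range {f : ℕ → ℕ → ℕ} (hrow : ∀ a, (Set.range fun y => f a y).Finite)
    (hcol : ∀ b, (Set.range fun x => f x b).Finite) : f ∈ T2bin := by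
  rintro u v (⟨U, hU⟩ | ⟨U, hU⟩) (⟨V, hV⟩ | ⟨V, hV⟩) <;> simp only [hU, hV]
  · exact EssUnary2.not_injOn_nabla (.inl ⟨fun x => f (U x) (V x), fun _ _ => rfl⟩)
  · exact not_injOn_nabla_of_finite_range (g := fun x y => f (U x) (V y))
      ((hrow (U 0)).subset (Set.range_comp_subset_range V fun y => f (U 0) y))
  · exact not_injOn_nabla_of_finite_range (g := fun x y => f (U y) (V x))
      ((hcol (V 0)).subset (Set.range_comp_subset_range U fun x => f x (V 0)))
  · exact EssUnary2.not_injOn_nabla (.inr ⟨fun y => f (U y) (V y), fun _ _ => rfl⟩)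

lemma edgeOp_mem_T2bin {E : Set (ℕ × ℕ)} (hE : ∀ a, {p ∈ E | p.1 = a ∨ p.2 = a}.Finite) :
    edgeOp E ∈ T2bin := by
  let values (a : ℕ) : Set ℕ :=
    insert 0 (Function.uncurry (edgeOp E) '' {p ∈ E | p.1 = a ∨ p.2 = a})
  have hvalues (a : ℕ) : (values a).Finite := ((hE a).image _).insert 0
  have hmem {a x y : ℕ} (hxy : x = a ∨ y = a) : edgeOp E x y ∈ values a := by
    by_cases hxyE : (x, y) ∈ E
    · exact .inr ⟨(x, y), ⟨hxyE, hxy⟩, rfl⟩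
    · exact .inl (if_neg hxyE)
  exact mem_T2bin_of_finite_range
    (fun a => (hvalues a).subset (Set.range_subset_iff.2 fun y => hmem (.inl rfl)))
    fun b => (hvalues b).subset (Set.range_subset_iff.2 fun x => hmem (.inr rfl))

lemma fst_comp_mem_T2bin (F : ℕ → ℕ) : (fun x _ => F x) ∈ T2bin := by
  rintro u v (⟨U, hU⟩ | ⟨U, hU⟩) - <;> simp only [hU]
  · exact EssUnary2.not_injOn_nabla (.inl ⟨F ∘ U, fun _ _ => rfl⟩)
  · exact EssUnary2.not_injOn_nabla (.inr ⟨F ∘ U, fun _ _ => rfl⟩)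

lemma unarySet_subset_cloneGen_T2ops : unarySet ⊆ cloneGen T2ops := by
  rintro _ ⟨F, rfl⟩
  have hclone := isClone_cloneGen T2ops
  exact hclone.2 1 0 (fun x => F (x 0)) (subset_cloneGen _ ⟨_, fst_comp_mem_T2bin F, rfl⟩)
    (fun _ x => x 0) fun _ => hclone.1 0 0

end NeverInjective

section AlmostDisjoint

/-- The graph of `k ↦ ⌊k * r⌋`, coded as a set of natural numbers. These sets form an almost
disjoint family indexed by the reals. -/
def beattySet (r : ℝ) : Set ℕ :=
  Set.range fun k : ℕ => Nat.pair k (Encodable.encode ⌊k * r⌋)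

lemma infinite_beattySet (r : ℝ) : (beattySet r).Infinite :=
  Set.infinite_range_of_injective fun _ _ h => (Nat.pair_eq_pair.1 h).1

lemma finite_beattySet_inter {r s : ℝ} (hrs : r ≠ s) : (beattySet r ∩ beattySet s).Finite := by
  obtain ⟨K, hK⟩ := exists_nat_gt (1 / |r - s|)
  rw [div_lt_iff₀ (abs_sub_pos.2 hrs)] at hK
  refine ((Set.finite_lt_nat K).image fun k => Nat.pair k (Encodable.encode ⌊k * r⌋)).subset ?_
  rintro _ ⟨⟨k, rfl⟩, ⟨l, hl⟩⟩
  obtain ⟨rfl, hfloor⟩ := Nat.pair_eq_pair.1 hl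
  refine ⟨l, ?_, rfl⟩
  have hclose : l * |r - s| < 1 := by
    rw [← Nat.abs_cast l, ← abs_mul, mul_sub]
    exact Int.abs_sub_lt_one_of_floor_eq_floor (Encodable.encode_injective hfloor).symm
  exact_mod_cast lt_of_mul_lt_mul_right (hclose.trans hK) (abs_nonneg (r - s))

end AlmostDisjoint

lemma exists_independent_T2ops :
    ∃ f : ℝ → Ops ℕ, (∀ r, f r ∈ T2ops) ∧
      ∀ r, ∃ C, IsClone C ∧ unarySet ⊆ C ∧ f r ∉ C ∧ ∀ s ≠ r, f s ∈ C := by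
  obtain ⟨G⟩ : Nonempty SparseTower := inferInstance
  refine ⟨fun r => binaryOp (edgeOp (G.edges (beattySet r))),
    fun r => ⟨_, edgeOp_mem_T2bin G.finite_setOf_mem_edges, rfl⟩, fun r =>
    ⟨linearGrowthClone (atTop ⊓ 𝓟 (beattySet r)) fun n => (G.V n).card,
      isClone_linearGrowthClone,
      Set.range_subset_iff.2 unaryOp_mem_linearGrowthClone,
      SparseTower.edgeOp_notMem_linearGrowthClone (infinite_beattySet r),
      fun s hs => SparseTower.edgeOp_mem_linearGrowthClone (finite_beattySet_inter hs)⟩⟩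

section Cardinality

lemma mk_ops (X : Type u) [Infinite X] : #(Ops X) = 2 ^ #X := by
  have hX := aleph0_le_mk X
  calc #(Ops X) = sum fun _ : ℕ => (2 : Cardinal.{u}) ^ #X := by
        simp only [mk_sigma, mk_arrow, mk_fin, lift_id, lift_natCast, lift_uzero]
        refine congrArg sum (funext fun n => ?_)
        rw [power_natCast, power_nat_eq hX (Nat.le_add_left 1 n), power_self_eq hX]
    _ = 2 ^ #X := by
        rw [sum_const, mk_nat, lift_aleph0, lift_uzero,
          aleph0_mul_eq (hX.trans (cantor _).le)]

lemma mk_set_ops_nat : #(Set (Ops ℕ)) = 2 ^ (2 ^ ℵ₀ : Cardinal) := by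
  rw [mk_set, mk_ops, mk_nat]

lemma mk_set_real : #(Set ℝ) = 2 ^ (2 ^ ℵ₀ : Cardinal) := by
  rw [mk_set, mk_real, two_power_aleph0]

end Cardinality

/-- **Goldstern–Sági–Shelah**: the power set of `ℝ` order-embeds into the interval
`[⟨O⁽¹⁾⟩, ⟨T2⟩]` of the clone lattice on `ℕ`; in particular there are `2^(2^ℵ₀)` clones
on `ℕ` containing all unary operations. -/
theorem stmt16 :
    (∃ ψ : Set ℝ → Set (Ops ℕ),
      Function.Injective ψ ∧
      (∀ A : Set ℝ, IsClone (ψ A)) ∧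
      (∀ A : Set ℝ, cloneGen unarySet ⊆ ψ A ∧ ψ A ⊆ cloneGen T2ops) ∧
      (∀ A B : Set ℝ, A ⊆ B ↔ ψ A ⊆ ψ B)) ∧
    #{C : Set (Ops ℕ) // IsClone C ∧ ∀ F : ℕ → ℕ, unaryOp F ∈ C} =
      (2 : Cardinal) ^ ((2 : Cardinal) ^ (ℵ₀ : Cardinal)) := by
  obtain ⟨f, hfT2, hf⟩ := exists_independent_T2ops
  let ψ (A : Set ℝ) : Set (Ops ℕ) := cloneGen (unarySet ∪ f '' A)
  have hψ_le_iff (A B : Set ℝ) : A ⊆ B ↔ ψ A ⊆ ψ B := (cloneGen_union_image_subset_iff hf).symm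
  have hψ_inj : ψ.Injective := fun A B h =>
    ((hψ_le_iff A B).2 h.subset).antisymm ((hψ_le_iff B A).2 h.superset)
  have hψ_clone (A : Set ℝ) : IsClone (ψ A) := isClone_cloneGen _
  have hψ_unary (A : Set ℝ) : unarySet ⊆ ψ A := Set.subset_union_left.trans (subset_cloneGen _)
  have hψ_T2 (A : Set ℝ) : ψ A ⊆ cloneGen T2ops :=
    cloneGen_subset (isClone_cloneGen _) <| Set.union_subset unarySet_subset_cloneGen_T2ops <|
      Set.image_subset_iff.2 fun r _ => subset_cloneGen _ (hfT2 r)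
  refine ⟨⟨ψ, hψ_inj, hψ_clone, fun A => ⟨cloneGen_subset (hψ_clone A) (hψ_unary A), hψ_T2 A⟩,
    hψ_le_iff⟩, le_antisymm ?_ ?_⟩
  · exact (mk_subtype_le _).trans mk_set_ops_nat.le
  · rw [← mk_set_real]
    exact mk_le_of_injective (f := fun A => ⟨ψ A, hψ_clone A, fun F => hψ_unary A ⟨F, rfl⟩⟩)
      fun A B h => hψ_inj (congrArg Subtype.val h)
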